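/- (Lemma 3.5, staying in the corridor.) Fix p, M1, M2, A ∈ (0,∞), δ1 ∈ (0,1/2), and σ = √(p(1+p)). There exist N4 ∈ ℕ and ε > 0, depending on p, M1, M2, A, δ1, such that the following holds for all integers n ≥ N4. Suppose x, y ∈ ℤ with x ≤ y, |x| ≤ M1·n^{1/2}, |y − n·p| ≤ M1·n^{1/2}, and B ∈ [−M2, M2]. Let f^t = f(·| A, B, σ^{-1}n^{-1/2}x, σ^{-1}n^{-1/2}(y−p·n), δ1) and f^b = f(·| −A, B, σ^{-1}n^{-1/2}x, σ^{-1}n^{-1/2}(y−p·n), δ1). If Q has law P_Geom^{0,n,x,y} and 𝒬 ∈ C([0,1]) is defined by 𝒬(t) = σ^{-1}·n^{-1/2}·(Q(t·n) − p·t·n), then P( f^t(t) ≥ 𝒬(t) ≥ f^b(t) for all t ∈ [0,1] ) > ε. -/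

import Mathlib

open MeasureTheory Filter Topology ProbabilityTheory
open scoped ENNReal NNReal

/-- An increasing (integer) path on the integer interval `⟦T0, T1⟧`,
extended constantly to the rest of `ℤ`. -/
def IncrPath (T0 T1 : ℤ) (L : ℤ → ℤ) : Prop :=
  (∀ j : ℤ, T0 ≤ j → j < T1 → L j ≤ L (j + 1)) ∧
  (∀ s : ℤ, s ≤ T0 → L s = L T0) ∧ (∀ s : ℤ, T1 ≤ s → L s = L T1)

/-- The set `Ω(T0,T1,x,y)` of increasing paths from `(T0,x)` to `(T1,y)`. -/
def OmegaPath (T0 T1 : ℤ) (x y : ℤ) : Set (ℤ → ℤ) :=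
  {L | IncrPath T0 T1 L ∧ L T0 = x ∧ L T1 = y}

/-- Linear interpolation of a real-valued function defined on `ℤ`. -/
noncomputable def interp (f : ℤ → ℝ) (t : ℝ) : ℝ :=
  f ⌊t⌋ + (t - ⌊t⌋) * (f (⌊t⌋ + 1) - f ⌊t⌋)

/-- Linear interpolation of an integer-valued function on `ℤ`. -/
noncomputable def interpZ (L : ℤ → ℤ) : ℝ → ℝ :=
  interp fun s => (L s : ℝ)

lemma interp_eq_on (f : ℤ → ℝ) (n : ℤ) :
    ∀ t ∈ Set.Icc (n : ℝ) ((n : ℝ) + 1),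
      interp f t = f n + (t - n) * (f (n + 1) - f n) := by
  intro t ht
  rcases lt_or_eq_of_le ht.2 with h | h
  · have hfl : ⌊t⌋ = n := by
      rw [Int.floor_eq_iff]
      · exact ⟨ht.1, by exact_mod_cast h⟩
    simp [interp, hfl]
  · have hfl : ⌊t⌋ = n + 1 := by
      rw [h, show ((n : ℝ) + 1) = ((n + 1 : ℤ) : ℝ) by push_cast; ring, Int.floor_intCast]
    rw [interp, hfl, h]
    push_cast
    ring

lemma continuous_interp (f : ℤ → ℝ) : Continuous (interp f) := by
  have hcov : (⋃ n : ℤ, Set.Icc (n : ℝ) ((n : ℝ) + 1)) = Set.univ := by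
    ext t
    simp only [Set.mem_iUnion, Set.mem_univ, iff_true, Set.mem_Icc]
    exact ⟨⌊t⌋, Int.floor_le t, (Int.lt_floor_add_one t).le⟩
  have hlf : LocallyFinite fun n : ℤ => Set.Icc (n : ℝ) ((n : ℝ) + 1) := by
    intro x
    refine ⟨Set.Ioo (x - 1) (x + 1), Ioo_mem_nhds (by linarith) (by linarith), ?_⟩
    apply Set.Finite.subset (Set.finite_Icc (⌊x⌋ - 2) (⌊x⌋ + 2))
    rintro n ⟨t, ht1, ht2⟩
    simp only [Set.mem_Icc] at ht1 ⊢
    simp only [Set.mem_Ioo] at ht2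
    constructor
    · have h1 : ((⌊x⌋ - 2 : ℤ) : ℝ) < n := by
        push_cast
        have := Int.floor_le x
        linarith [ht1.2, ht2.1]
      exact_mod_cast h1.le
    · have h2 : (n : ℝ) < ((⌊x⌋ + 2 : ℤ) : ℝ) := by
        push_cast
        have := Int.lt_floor_add_one x
        linarith [ht1.1, ht2.2]
      exact_mod_cast h2.le
  refine hlf.continuous hcov (fun n => isClosed_Icc) (fun n => ?_)
  have hc : ContinuousOn (fun t : ℝ => f n + (t - n) * (f (n + 1) - f n))
      (Set.Icc (n : ℝ) ((n : ℝ) + 1)) := (by continuity : Continuous _).continuousOn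
  exact hc.congr (interp_eq_on f n)

/-- The random variable `X` is uniformly distributed on the (finite) set `S` under `P`. -/
def UniformOn {Ω E : Type*} [MeasurableSpace Ω] (P : Measure Ω) (X : Ω → E)
    (S : Set E) : Prop :=
  (∀ ω, X ω ∈ S) ∧ ∀ Q ∈ S, P {ω | X ω = Q} = ((Nat.card S : ℝ≥0∞))⁻¹

/-- The piecewise linear function `f(·|A,B,x,y,δ)` on `[0,1]`: it takes value `x + A` at `0`,
`B + A` on `[δ, 1-δ]`, `y + A` at `1`, and is linear on `[0,δ]`, `[δ,1-δ]` and `[1-δ,1]`. -/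
noncomputable def corridor (A B x y δ : ℝ) (t : ℝ) : ℝ :=
  if t ≤ δ then x + A + (t / δ) * (B - x)
  else if t ≤ 1 - δ then B + A
  else B + A + ((t - (1 - δ)) / δ) * (y - B)


/-- Number of paths with `r` steps and total height `e`. -/
noncomputable def VV (r : ℕ) (e : ℤ) : ℝ := if 0 ≤ e then (Nat.multichoose r e.toNat : ℝ) else 0

lemma VV_nonneg (r : ℕ) (e : ℤ) : 0 ≤ VV r e := by
  unfold VV; split_ifs <;> positivity

lemma VV_nat (r e : ℕ) : VV r (e : ℤ) = Nat.multichoose r e := by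
  simp [VV]

lemma VV_neg (r : ℕ) (e : ℤ) (h : e < 0) : VV r e = 0 := by
  unfold VV; rw [if_neg (by omega)]

lemma VV_zero (e : ℤ) : VV 0 e = if e = 0 then 1 else 0 := by
  rcases lt_or_ge e 0 with h | h
  · rw [VV_neg _ _ h, if_neg (by omega)]
  · lift e to ℕ using h
    rw [VV_nat]
    cases e with
    | zero => simp
    | succ k => simp [Nat.multichoose_zero_succ]; omega

lemma mc_sum (r e : ℕ) :
    ∑ i ∈ Finset.range (e + 1), (Nat.multichoose r i : ℝ) = Nat.multichoose (r + 1) e := by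
  induction e with
  | zero => simp
  | succ e ih =>
    rw [Finset.sum_range_succ, ih, Nat.multichoose_succ_succ]; push_cast; ring

lemma mc_ratio_nat (r e : ℕ) :
    (e + 1) * Nat.multichoose r (e + 1) = (r + e) * Nat.multichoose r e := by
  cases r with
  | zero => cases e <;> simp [Nat.multichoose_zero_succ]
  | succ r =>
    rw [Nat.multichoose_eq, Nat.multichoose_eq]
    have h1 : r + 1 + (e + 1) - 1 = (r + e) + 1 := by omega
    have h2 : r + 1 + e - 1 = r + e := by omega
    rw [h1, h2]
    have := Nat.add_one_mul_choose_eq (r + e) e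
    rw [mul_comm, ← this]; ring

lemma mc_ratio (r e : ℕ) :
    ((e : ℝ) + 1) * Nat.multichoose r (e + 1) = (r + e) * Nat.multichoose r e := by
  exact_mod_cast mc_ratio_nat r e

lemma mc_rel (r e : ℕ) :
    ((r : ℝ) + e) * Nat.multichoose r e = r * Nat.multichoose (r + 1) e := by
  cases e with
  | zero => simp
  | succ e =>
    have h1 := mc_ratio (r + 1) e
    have h2 : (Nat.multichoose (r + 1) (e + 1) : ℝ)
      = Nat.multichoose r (e + 1) + Nat.multichoose (r + 1) e := by
      rw [Nat.multichoose_succ_succ]; push_cast; ring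
    push_cast at *
    have : (Nat.multichoose r (e + 1) : ℝ)
      = Nat.multichoose (r + 1) (e + 1) - Nat.multichoose (r + 1) e := by linarith
    rw [this]; linarith

lemma mc_sum1 (r e : ℕ) :
    ((r : ℝ) + 1) * ∑ i ∈ Finset.range (e + 1), (i : ℝ) * Nat.multichoose r i
      = r * e * Nat.multichoose (r + 1) e := by
  induction e with
  | zero => simp
  | succ e ih =>
    rw [Finset.sum_range_succ, mul_add, ih]
    have h1 := mc_ratio (r + 1) e
    have h3 := mc_rel r (e + 1)
    have h2 : (Nat.multichoose (r + 1) (e + 1) : ℝ)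
      = Nat.multichoose r (e + 1) + Nat.multichoose (r + 1) e := by
      rw [Nat.multichoose_succ_succ]; push_cast; ring
    push_cast at *
    generalize (Nat.multichoose (r + 1) (e + 1) : ℝ) = a at *
    generalize (Nat.multichoose r (e + 1) : ℝ) = b at *
    generalize (Nat.multichoose (r + 1) e : ℝ) = c at *
    have : c = a - b := by linarith
    subst this
    linear_combination h3

lemma mc_sum2 (r e : ℕ) :
    ((r : ℝ) + 2) * ∑ i ∈ Finset.range (e + 1), (i : ℝ) * (i - 1) * Nat.multichoose r i
      = r * e * (e - 1) * Nat.multichoose (r + 1) e := by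
  induction e with
  | zero => simp
  | succ e ih =>
    rw [Finset.sum_range_succ, mul_add, ih]
    have h1 := mc_ratio (r + 1) e
    have h3 := mc_rel r (e + 1)
    have h2 : (Nat.multichoose (r + 1) (e + 1) : ℝ)
      = Nat.multichoose r (e + 1) + Nat.multichoose (r + 1) e := by
      rw [Nat.multichoose_succ_succ]; push_cast; ring
    push_cast at *
    generalize (Nat.multichoose (r + 1) (e + 1) : ℝ) = a at *
    generalize (Nat.multichoose r (e + 1) : ℝ) = b at *
    generalize (Nat.multichoose (r + 1) e : ℝ) = c at *
    have : c = a - b := by linarith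
    subst this
    linear_combination 2 * (e : ℝ) * h3

lemma one_step_nat (c : ℝ) (hc : 0 ≤ c) (r e : ℕ) :
    ∑ i ∈ Finset.range (e + 1), (Nat.multichoose r i : ℝ) *
        (((i : ℝ) - c * r) ^ 2 + (2 * c ^ 2 + c + 1 / 2) * r)
      ≤ Nat.multichoose (r + 1) e *
        (((e : ℝ) - c * (r + 1)) ^ 2 + (2 * c ^ 2 + c + 1 / 2) * (r + 1)) := by
  have hW : (0 : ℝ) ≤ Nat.multichoose (r + 1) e := by positivity
  set W : ℝ := ((Nat.multichoose (r + 1) e : ℕ) : ℝ) with hWd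
  have s0 := mc_sum r e
  have s1 := mc_sum1 r e
  have s2 := mc_sum2 r e
  rw [← hWd] at s0 s1 s2
  have hexp : ∑ i ∈ Finset.range (e + 1), (Nat.multichoose r i : ℝ) *
        (((i : ℝ) - c * r) ^ 2 + (2 * c ^ 2 + c + 1 / 2) * r)
      = (∑ i ∈ Finset.range (e + 1), (i : ℝ) * (i - 1) * Nat.multichoose r i)
        + (1 - 2 * c * r) * (∑ i ∈ Finset.range (e + 1), (i : ℝ) * Nat.multichoose r i)
        + (c ^ 2 * r ^ 2 + (2 * c ^ 2 + c + 1 / 2) * r) *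
          ∑ i ∈ Finset.range (e + 1), (Nat.multichoose r i : ℝ) := by
    rw [Finset.mul_sum, Finset.mul_sum, ← Finset.sum_add_distrib, ← Finset.sum_add_distrib]
    exact Finset.sum_congr rfl fun i _ => by ring
  have hr0 : (0 : ℝ) ≤ r := by positivity
  have s1' : ∑ i ∈ Finset.range (e + 1), (i : ℝ) * Nat.multichoose r i
      = r * e / (r + 1) * W := by
    field_simp; linarith
  have s2' : ∑ i ∈ Finset.range (e + 1), (i : ℝ) * (i - 1) * Nat.multichoose r i
      = r * e * (e - 1) / (r + 2) * W := by
    field_simp; linarith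
  rw [hexp, s0, s1', s2']
  have key : (r : ℝ) * e * (e - 1) / (r + 2) + (1 - 2 * c * r) * (r * e / (r + 1))
      + (c ^ 2 * r ^ 2 + (2 * c ^ 2 + c + 1 / 2) * r)
      ≤ ((e : ℝ) - c * (r + 1)) ^ 2 + (2 * c ^ 2 + c + 1 / 2) * (r + 1) := by
    rcases Nat.eq_zero_or_pos r with h0 | h0
    · subst h0; simp; nlinarith [sq_nonneg ((e : ℝ) - c)]
    have hr1 : (1 : ℝ) ≤ r := by exact_mod_cast h0
    obtain ⟨v, hv⟩ : ∃ v : ℝ, v = (e : ℝ) / (r + 1) := ⟨_, rfl⟩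
    have hev : (e : ℝ) = v * (r + 1) := by rw [hv]; field_simp
    have hv0 : 0 ≤ v := by rw [hv]; positivity
    have hR : (0 : ℝ) < r + 1 := by positivity
    have h1 : (r : ℝ) * e / (r + 1) = r * v := by rw [hev]; field_simp
    have he : (0 : ℝ) ≤ e := by positivity
    -- second moment
    have h2 : (r : ℝ) * e * (e - 1) / (r + 2) = r * (r + 1) * v ^ 2 * (r + 1) / (r + 2)
        - r * (r + 1) * v / (r + 2) := by
      rw [hev]; field_simp
    have h4 : r * v - v ≤ (r : ℝ) * (r + 1) * v / (r + 2) := by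
      rw [le_div_iff₀ (by positivity)]
      nlinarith [mul_nonneg hv0 hr0]
    have h3 : (r : ℝ) * (r + 1) * v ^ 2 * (r + 1) / (r + 2) ≤ v ^ 2 * (r ^ 2 + 1) := by
      rw [div_le_iff₀ (by positivity)]
      have : 0 ≤ v ^ 2 := by positivity
      nlinarith [mul_nonneg this hr0, mul_nonneg this (mul_nonneg hr0 hr0)]
    rw [h2, h1, hev]
    have h5 : v ^ 2 * (r ^ 2 + 1) - (r * v - v) + (1 - 2 * c * r) * (r * v)
      + (c ^ 2 * r ^ 2 + (2 * c ^ 2 + c + 1 / 2) * r) ≤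
      (v * (r + 1) - c * (r + 1)) ^ 2 + (2 * c ^ 2 + c + 1 / 2) * (r + 1) := by
      nlinarith [sq_nonneg (v - c - 1), sq_nonneg (v - c + 1), sq_nonneg (v - 2 * c),
        mul_nonneg (sub_nonneg.2 hr1) (sq_nonneg (v - c)), sq_nonneg (v - c)]
    linarith
  calc _ = ((r : ℝ) * e * (e - 1) / (r + 2) + (1 - 2 * c * r) * (r * e / (r + 1))
      + (c ^ 2 * r ^ 2 + (2 * c ^ 2 + c + 1 / 2) * r)) * W := by ring
    _ ≤ _ := by rw [mul_comm W]; exact mul_le_mul_of_nonneg_right key hW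

noncomputable def kap (c : ℝ) : ℝ := 2 * c ^ 2 + c + 1 / 2

/-- The defect function. -/
noncomputable def dfc (c lam : ℝ) (r : ℕ) (e : ℤ) : ℝ :=
  1 - (((e : ℝ) - c * r) ^ 2 + kap c * r) / lam ^ 2

lemma sum_Icc_shift (x z w : ℤ) (hxz : x ≤ z) (f : ℤ → ℝ) (hf : ∀ e < 0, f e = 0)
    (hw : z ≤ w) :
    ∑ u ∈ Finset.Icc x w, f (u - z) = ∑ i ∈ Finset.range ((w - z).toNat + 1), f (i : ℤ) := by
  symm
  refine Finset.sum_of_injOn (fun i : ℕ => z + (i : ℤ)) ?_ ?_ ?_ ?_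
  · intro a _ b _ h; simpa using h
  · intro i hi
    simp only [Finset.coe_range, Set.mem_Iio, Finset.coe_Icc, Set.mem_Icc] at *
    omega
  · intro u hu hnot
    apply hf
    by_contra hcon
    apply hnot
    simp only [Finset.mem_Icc] at hu
    refine ⟨(u - z).toNat, ?_, ?_⟩
    · simp only [Finset.coe_range, Set.mem_Iio]; omega
    · simp only; omega
  · intro i _; congr 1; ring

lemma VV_sum (x z w : ℤ) (hxz : x ≤ z) (r : ℕ) :
    ∑ u ∈ Finset.Icc x w, VV r (u - z) = VV (r + 1) (w - z) := by
  rcases lt_or_ge w z with h | h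
  · rw [VV_neg _ _ (by omega)]
    apply Finset.sum_eq_zero
    intro u hu
    rw [Finset.mem_Icc] at hu
    exact VV_neg _ _ (by omega)
  · rw [sum_Icc_shift x z w hxz (VV r) (fun e he => VV_neg r e he) h]
    simp_rw [VV_nat]
    rw [mc_sum, ← VV_nat]; congr 1; omega

lemma one_step (c lam : ℝ) (hc : 0 ≤ c) (hl : 0 < lam) (x z w : ℤ) (hxz : x ≤ z) (r : ℕ) :
    VV (r + 1) (w - z) * dfc c lam (r + 1) (w - z) ≤
      ∑ u ∈ Finset.Icc x w, VV r (u - z) * dfc c lam r (u - z) := by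
  rcases lt_or_ge w z with h | h
  · rw [VV_neg _ _ (by omega)]
    rw [Finset.sum_eq_zero]
    · simp
    intro u hu
    rw [Finset.mem_Icc] at hu
    rw [VV_neg _ _ (by omega)]; simp
  · rw [sum_Icc_shift x z w hxz (fun e => VV r e * dfc c lam r e)
      (fun e he => by simp [VV_neg r e he]) h]
    obtain ⟨e, he⟩ : ∃ e : ℕ, w - z = e := ⟨(w - z).toNat, by omega⟩
    rw [he]
    simp only [VV_nat, Int.toNat_natCast, dfc, kap]
    have h1 := one_step_nat c hc r e
    have h2 := mc_sum r e
    have h3 : ∑ i ∈ Finset.range (e + 1), (Nat.multichoose r i : ℝ) *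
        (1 - ((((i : ℤ) : ℝ) - c * r) ^ 2 + (2 * c ^ 2 + c + 1 / 2) * r) / lam ^ 2)
        = ∑ i ∈ Finset.range (e + 1), (Nat.multichoose r i : ℝ)
          - (∑ i ∈ Finset.range (e + 1), (Nat.multichoose r i : ℝ) *
        (((i : ℝ) - c * r) ^ 2 + (2 * c ^ 2 + c + 1 / 2) * r)) / lam ^ 2 := by
      rw [Finset.sum_div, ← Finset.sum_sub_distrib]
      refine Finset.sum_congr rfl fun i _ => ?_
      push_cast; ring
    rw [h3, h2]
    have h4 := div_le_div_of_nonneg_right h1 (by positivity : (0 : ℝ) ≤ lam ^ 2)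
    push_cast
    rw [mul_sub, mul_one, ← mul_div_assoc]
    linarith

lemma dfc_nonpos (c lam : ℝ) (hc : 0 ≤ c) (hl : 0 < lam) (r : ℕ) (e : ℤ)
    (h : ¬ |(e : ℝ) - c * r| < lam) : dfc c lam r e ≤ 0 := by
  unfold dfc
  have h1 : lam ^ 2 ≤ ((e : ℝ) - c * r) ^ 2 := by
    rw [← sq_abs ((e : ℝ) - c * r)]
    push Not at h
    gcongr
  have h2 : 0 ≤ kap c * r := by unfold kap; positivity
  have : 1 ≤ (((e : ℝ) - c * r) ^ 2 + kap c * r) / lam ^ 2 := by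
    rw [le_div_iff₀ (by positivity)]; linarith
  linarith

open Classical in
/-- Number of paths staying in the tube `T`. -/
noncomputable def cnt (T : ℕ → ℤ → Prop) (x : ℤ) : ℕ → ℤ → ℕ
  | 0, w => if w = x then 1 else 0
  | (j + 1), w => if T (j + 1) w then ∑ z ∈ Finset.Icc x w, cnt T x j z else 0

lemma cnt_true (x : ℤ) (j : ℕ) (w : ℤ) :
    (cnt (fun _ _ => True) x j w : ℝ) = VV j (w - x) := by
  induction j generalizing w with
  | zero =>
    rw [VV_zero, cnt]
    by_cases h : w = x
    · simp [h]
    · rw [if_neg h, if_neg (by omega)]; simp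
  | succ j ih =>
    rw [cnt, if_pos trivial]
    push_cast
    rw [← VV_sum x x w le_rfl]
    exact Finset.sum_congr rfl fun u _ => ih u

lemma block (T : ℕ → ℤ → Prop) (x : ℤ) (c lam : ℝ) (hc : 0 ≤ c) (hl : 0 < lam) (t m : ℕ)
    (Win : Finset ℤ) (ε : ℝ) (hε : 0 ≤ ε) (hx : ∀ z ∈ Win, x ≤ z)
    (hG : ∀ z ∈ Win, ε * VV t (z - x) ≤ cnt T x t z)
    (hT : ∀ r, r ≤ m → 1 ≤ r → ∀ z ∈ Win, ∀ w : ℤ, |((w - z : ℤ) : ℝ) - c * r| < lam →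
      T (t + r) w) :
    ∀ r, r ≤ m → ∀ w : ℤ, ε * ∑ z ∈ Win, VV t (z - x) * (VV r (w - z) * dfc c lam r (w - z))
      ≤ cnt T x (t + r) w := by
  intro r
  induction r with
  | zero =>
    intro _ w
    have h0 : ∀ z ∈ Win, VV t (z - x) * (VV 0 (w - z) * dfc c lam 0 (w - z))
        = if w = z then VV t (w - x) else 0 := by
      intro z _
      rw [VV_zero]
      by_cases h : w = z
      · subst h; simp [dfc]
      · rw [if_neg (by omega), if_neg h]; simp
    rw [Finset.sum_congr rfl h0, Finset.sum_ite_eq]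
    split_ifs with h
    · exact hG w h
    · simp
  | succ r ih =>
    intro hr w
    have ih' := ih (by omega)
    by_cases hTw : T (t + r + 1) w
    · rw [← add_assoc, cnt, if_pos hTw]
      push_cast
      calc _ ≤ ε * ∑ z ∈ Win, VV t (z - x) *
              ∑ u ∈ Finset.Icc x w, VV r (u - z) * dfc c lam r (u - z) := by
            apply mul_le_mul_of_nonneg_left _ hε
            apply Finset.sum_le_sum
            intro z hz
            apply mul_le_mul_of_nonneg_left _ (VV_nonneg _ _)
            exact one_step c lam hc hl x z w (hx z hz) r
        _ = ∑ u ∈ Finset.Icc x w, ε * ∑ z ∈ Win, VV t (z - x) *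
              (VV r (u - z) * dfc c lam r (u - z)) := by
            simp_rw [Finset.mul_sum]
            rw [Finset.sum_comm]
        _ ≤ _ := Finset.sum_le_sum fun u _ => ih' u
    · have : ε * ∑ z ∈ Win, VV t (z - x) * (VV (r + 1) (w - z) * dfc c lam (r + 1) (w - z)) ≤ 0 := by
        apply mul_nonpos_of_nonneg_of_nonpos hε
        apply Finset.sum_nonpos
        intro z hz
        apply mul_nonpos_of_nonneg_of_nonpos (VV_nonneg _ _)
        apply mul_nonpos_of_nonneg_of_nonpos (VV_nonneg _ _)
        apply dfc_nonpos c lam hc hl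
        intro hcon
        exact hTw (hT (r + 1) hr (by omega) z hz w hcon)
      exact this.trans (Nat.cast_nonneg _)

lemma cheb (x : ℤ) (c lam : ℝ) (hc : 0 ≤ c) (hl : 0 < lam) (t : ℕ)
    (Z : Finset ℤ) (hx : ∀ z ∈ Z, x ≤ z)
    (hZ : ∀ z : ℤ, x ≤ z → |((z - x : ℤ) : ℝ) - c * t| < lam → z ∈ Z) (m : ℕ) (w : ℤ) :
    VV (t + m) (w - x) * dfc c lam (t + m) (w - x) ≤
      ∑ z ∈ Z, VV t (z - x) * VV m (w - z) := by
  induction m generalizing w with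
  | zero =>
    have h0 : ∀ z ∈ Z, VV t (z - x) * VV 0 (w - z)
        = if w = z then VV t (w - x) else 0 := by
      intro z _
      rw [VV_zero]
      by_cases h : w = z
      · subst h; simp
      · rw [if_neg (by omega), if_neg h]; simp
    rw [Finset.sum_congr rfl h0, Finset.sum_ite_eq]
    rcases lt_or_ge w x with hwx | hwx
    · simp [VV_neg t (w - x) (by omega)]
    split_ifs with h
    · have : dfc c lam t (w - x) ≤ 1 := by
        unfold dfc
        have : 0 ≤ ((((w - x : ℤ) : ℝ) - c * t) ^ 2 + kap c * t) / lam ^ 2 := by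
          unfold kap; positivity
        linarith
      exact mul_le_of_le_one_right (VV_nonneg _ _) this
    · apply mul_nonpos_of_nonneg_of_nonpos (VV_nonneg _ _)
      apply dfc_nonpos c lam hc hl
      intro hcon
      exact h (hZ w hwx hcon)
  | succ m ih =>
    rw [← add_assoc]
    calc _ ≤ ∑ u ∈ Finset.Icc x w, VV (t + m) (u - x) * dfc c lam (t + m) (u - x) :=
          one_step c lam hc hl x x w le_rfl (t + m)
      _ ≤ ∑ u ∈ Finset.Icc x w, ∑ z ∈ Z, VV t (z - x) * VV m (u - z) :=
          Finset.sum_le_sum fun u _ => ih u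
      _ = ∑ z ∈ Z, VV t (z - x) * ∑ u ∈ Finset.Icc x w, VV m (u - z) := by
          rw [Finset.sum_comm]; simp_rw [Finset.mul_sum]
      _ = _ := Finset.sum_congr rfl fun z hz => by rw [VV_sum x z w (hx z hz)]

lemma VV_ratio (r : ℕ) (e : ℤ) (he : 0 ≤ e) :
    ((e : ℝ) + 1) * VV r (e + 1) = (r + e) * VV r e := by
  lift e to ℕ using he
  have := mc_ratio r e
  rw [← VV_nat, ← VV_nat] at this
  push_cast at *
  exact this

/-- Extend a path on `[0,j]` by one more value. -/
def extPath (j : ℕ) (w : ℤ) (L : ℤ → ℤ) : ℤ → ℤ := fun s => if s ≤ (j : ℤ) then L s else w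

open Classical in
noncomputable def pathFin (T : ℕ → ℤ → Prop) (x : ℤ) : ℕ → ℤ → Finset (ℤ → ℤ)
  | 0, w => if w = x then {fun _ => x} else ∅
  | (j + 1), w => if T (j + 1) w then
      (Finset.Icc x w).biUnion (fun z => (pathFin T x j z).image (extPath j w)) else ∅

lemma incr_le (n : ℕ) (x w : ℤ) (L : ℤ → ℤ) (h : L ∈ OmegaPath 0 n x w) :
    ∀ j : ℕ, j ≤ n → x ≤ L j := by
  obtain ⟨⟨h1, h2, h3⟩, h4, h5⟩ := h
  intro j
  induction j with
  | zero => intro _; simp [h4]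
  | succ j ih =>
    intro hj
    have := h1 j (by omega) (by omega)
    push_cast
    exact (ih (by omega)).trans this

lemma mem_pathFin (T : ℕ → ℤ → Prop) (x : ℤ) (n : ℕ) (w : ℤ) (L : ℤ → ℤ) :
    L ∈ pathFin T x n w ↔ L ∈ OmegaPath 0 n x w ∧ ∀ j : ℕ, 1 ≤ j → j ≤ n → T j (L j) := by
  classical
  induction n generalizing w L with
  | zero =>
    rw [pathFin]
    constructor
    · intro h
      split_ifs at h with hw
      · rw [Finset.mem_singleton] at h
        subst h; subst hw
        refine ⟨⟨⟨?_, ?_, ?_⟩, ?_, ?_⟩, ?_⟩ <;> simp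
        intro j h1 h2; omega
      · simp at h
    · rintro ⟨⟨⟨h1, h2, h3⟩, h4, h5⟩, _⟩
      simp only [Nat.cast_zero] at h5 h3
      have : w = x := by rw [← h4, ← h5]
      rw [if_pos this, Finset.mem_singleton]
      funext s
      rcases le_total s 0 with h | h
      · rw [h2 s h, h4]
      · rw [h3 s h, h4]
  | succ n ih =>
    rw [pathFin]
    constructor
    · intro h
      split_ifs at h with hT
      · simp only [Finset.mem_biUnion, Finset.mem_image, Finset.mem_Icc] at h
        obtain ⟨z, ⟨hz1, hz2⟩, L', hL', rfl⟩ := h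
        rw [ih] at hL'
        obtain ⟨⟨⟨h1, h2, h3⟩, h4, h5⟩, h6⟩ := hL'
        refine ⟨⟨⟨?_, ?_, ?_⟩, ?_, ?_⟩, ?_⟩
        · intro j hj1 hj2
          simp only [extPath]
          push_cast at hj2
          rw [if_pos (by omega)]
          split_ifs with hj
          · exact h1 j hj1 (by omega)
          · have : j = n := by omega
            rw [this, h5]; exact hz2
        · intro s hs
          simp only [extPath]
          rw [if_pos (by omega), if_pos (by omega)]; exact h2 s hs
        · intro s hs
          push_cast at hs
          simp only [extPath]
          push_cast
          rw [if_neg (by omega), if_neg (by omega)]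
        · simp only [extPath]
          rw [if_pos (by omega)]; exact h4
        · simp only [extPath]; push_cast
          rw [if_neg (by omega)]
        · intro j hj1 hj2
          simp only [extPath]
          split_ifs with hj
          · exact h6 j hj1 (by omega)
          · have : j = n + 1 := by omega
            rw [this]; exact hT
      · simp at h
    · rintro ⟨hL, h6⟩
      have hx := incr_le _ _ _ _ hL
      obtain ⟨⟨h1, h2, h3⟩, h4, h5⟩ := hL
      have hT : T (n + 1) w := by
        have := h6 (n + 1) (by omega) le_rfl
        rwa [h5] at this
      rw [if_pos hT]
      simp only [Finset.mem_biUnion, Finset.mem_image, Finset.mem_Icc]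
      have hstep := h1 n (by omega) (by push_cast; omega)
      push_cast at h5 h3
      rw [h5] at hstep
      refine ⟨L n, ⟨hx n (by omega), hstep⟩, extPath n (L n) L, ?_, ?_⟩
      · rw [ih]
        refine ⟨⟨⟨?_, ?_, ?_⟩, ?_, ?_⟩, ?_⟩
        · intro j hj1 hj2
          simp only [extPath]
          rw [if_pos (by omega), if_pos (by omega)]
          exact h1 j hj1 (by push_cast; omega)
        · intro s hs
          simp only [extPath]
          rw [if_pos (by omega), if_pos (by omega)]; exact h2 s hs
        · intro s hs
          simp only [extPath]
          rw [if_pos le_rfl]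
          split_ifs with h
          · have : s = n := by omega
            rw [this]
          · rfl
        · simp only [extPath]
          rw [if_pos (by omega)]; exact h4
        · simp only [extPath]
          rw [if_pos le_rfl]
        · intro j hj1 hj2
          simp only [extPath]
          rw [if_pos (by omega)]
          exact h6 j hj1 (by omega)
      · funext s
        simp only [extPath]
        split_ifs with h
        · rfl
        · rw [h3 s (by omega), h5]

lemma card_pathFin (T : ℕ → ℤ → Prop) (x : ℤ) (n : ℕ) (w : ℤ) :
    (pathFin T x n w).card = cnt T x n w := by
  classical
  induction n generalizing w with
  | zero => rw [pathFin, cnt]; split_ifs <;> simp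
  | succ n ih =>
    rw [pathFin, cnt]
    split_ifs with hT
    swap
    · simp
    have hend : ∀ z, ∀ L ∈ pathFin T x n z, L n = z ∧ ∀ s, (n : ℤ) ≤ s → L s = z := by
      intro z L hL
      rw [mem_pathFin] at hL
      refine ⟨hL.1.2.2, fun s hs => ?_⟩
      rw [hL.1.1.2.2 s hs, hL.1.2.2]
    rw [Finset.card_biUnion]
    · apply Finset.sum_congr rfl
      intro z _
      rw [← ih z]
      apply Finset.card_image_of_injOn
      intro L1 h1 L2 h2 h
      funext s
      rcases le_total s n with hs | hs
      · have := congrFun h s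
        simp only [extPath, if_pos hs] at this
        exact this
      · rw [(hend z L1 h1).2 s hs, (hend z L2 h2).2 s hs]
    · intro z1 _ z2 _ hne
      show Disjoint _ _
      rw [Finset.disjoint_left]
      intro L h1 h2
      simp only [Finset.mem_image] at h1 h2
      obtain ⟨L1, hL1, e1⟩ := h1
      obtain ⟨L2, hL2, e2⟩ := h2
      apply hne
      rw [← (hend z1 L1 hL1).1, ← (hend z2 L2 hL2).1]
      have := congrFun (e1.trans e2.symm) n
      simpa [extPath] using this

lemma uniform_lower {Ω : Type} [MeasurableSpace Ω] (P : Measure Ω) [IsProbabilityMeasure P]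
    (Q : Ω → ℤ → ℤ) (n : ℕ) (x y : ℤ) (hQ : UniformOn P Q (OmegaPath 0 n x y))
    (T : ℕ → ℤ → Prop) (ε : ℝ) (hε : 0 ≤ ε) (S : Set Ω)
    (hS : ∀ ω, (∀ j : ℕ, 1 ≤ j → j ≤ n → T j (Q ω j)) → ω ∈ S)
    (hcnt : ε * VV n (y - x) ≤ cnt T x n y) : ENNReal.ofReal ε ≤ P S := by
  classical
  set F := pathFin (fun _ _ => True) x n y with hF
  set G := pathFin T x n y with hG
  have hFm : ∀ L, L ∈ F ↔ L ∈ OmegaPath 0 n x y := by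
    intro L; rw [hF, mem_pathFin]; simp
  have hFs : OmegaPath 0 n x y = (F : Set (ℤ → ℤ)) := by
    ext L; rw [Finset.mem_coe, hFm]
  have hGF : G ⊆ F := by
    intro L hL; rw [hFm]; rw [hG, mem_pathFin] at hL; exact hL.1
  have hcard : Nat.card (OmegaPath 0 n x y) = F.card := by
    rw [hFs]; simp
  have hFr : (F.card : ℝ) = VV n (y - x) := by
    rw [hF, card_pathFin, cnt_true]
  have hGr : ε * F.card ≤ G.card := by
    rw [hFr, hG, card_pathFin]; exact hcnt
  have hFpos : 0 < F.card := by
    have : Nonempty Ω := nonempty_of_isProbabilityMeasure P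
    obtain ⟨ω⟩ := this
    exact Finset.card_pos.2 ⟨Q ω, (hFm _).2 (hQ.1 ω)⟩
  have hcov : (Set.univ : Set Ω) ⊆ S ∪ ⋃ L ∈ F \ G, {ω | Q ω = L} := by
    intro ω _
    by_cases h : Q ω ∈ G
    · left
      apply hS
      rw [hG, mem_pathFin] at h
      exact h.2
    · right
      simp only [Set.mem_iUnion]
      exact ⟨Q ω, Finset.mem_sdiff.2 ⟨(hFm _).2 (hQ.1 ω), h⟩, rfl⟩
  have h1 : (1 : ℝ≥0∞) ≤ P S + ((F \ G).card : ℝ≥0∞) * (F.card : ℝ≥0∞)⁻¹ := by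
    calc (1 : ℝ≥0∞) = P Set.univ := (measure_univ).symm
      _ ≤ P (S ∪ ⋃ L ∈ F \ G, {ω | Q ω = L}) := measure_mono hcov
      _ ≤ P S + P (⋃ L ∈ F \ G, {ω | Q ω = L}) := measure_union_le _ _
      _ ≤ P S + ∑ L ∈ F \ G, P {ω | Q ω = L} := by
          gcongr; exact measure_biUnion_finset_le _ _
      _ = _ := by
          congr 1
          rw [Finset.sum_congr rfl (fun L hL => hQ.2 L ((hFm L).1 (Finset.mem_sdiff.1 hL).1)),
            Finset.sum_const, hcard, nsmul_eq_mul]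
  have hPS : P S ≠ ⊤ := measure_ne_top _ _
  have hFp : (0 : ℝ) < F.card := by exact_mod_cast hFpos
  have h2 : ((F \ G).card : ℝ≥0∞) * (F.card : ℝ≥0∞)⁻¹
      = ENNReal.ofReal ((F \ G).card / F.card) := by
    rw [ENNReal.ofReal_div_of_pos hFp, ENNReal.ofReal_natCast, ENNReal.ofReal_natCast,
      div_eq_mul_inv]
  rw [h2] at h1
  have h3 : 1 ≤ (P S).toReal + ((F \ G).card : ℝ) / F.card := by
    have h4 := ENNReal.toReal_mono (by simp [hPS]) h1
    rw [ENNReal.toReal_add hPS (by simp), ENNReal.toReal_ofReal (by positivity)] at h4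
    simpa using h4
  have h5 : ((F \ G).card : ℝ) = F.card - G.card := by
    rw [Finset.card_sdiff_of_subset hGF, Nat.cast_sub (Finset.card_le_card hGF)]
  apply ENNReal.ofReal_le_of_le_toReal
  rw [h5] at h3
  have h6 : ((F.card : ℝ) - G.card) / F.card ≤ 1 - ε := by
    rw [div_le_iff₀ hFp]; linarith
  linarith

lemma adj_real (p C0 C q s t m a b : ℝ) (hp : 0 < p) (hC0 : 0 ≤ C0) (hC : 0 ≤ C) (hq : 0 < q)
    (hs : 1 ≤ s) (ht0 : 0 ≤ t) (ht : t ≤ s ^ 2) (hm1 : 1 ≤ m) (hm : m ≤ s ^ 2)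
    (ha : |a - p * t| ≤ C * s) (hb : |b - p * m| ≤ (C0 + C) * s)
    (ha0 : q * s ^ 2 ≤ a) (hb0 : q * s ^ 2 ≤ b) :
    (t + a) * b ≤ (1 + (2 * C0 + 4 * C + 2 * p + 2) / (q ^ 2 * s)) * ((a + 1) * (m + b - 1)) ∧
    (a + 1) * (m + b - 1) ≤ (1 + (2 * C0 + 4 * C + 2 * p + 2) / (q ^ 2 * s)) * ((t + a) * b) := by
  have hs0 : 0 < s := by linarith
  have hqs : 0 < q * s ^ 2 := by positivity
  set K := 2 * C0 + 4 * C + 2 * p + 2 with hK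
  have hK0 : 0 < K := by positivity
  have hs23 : s ^ 2 ≤ s ^ 3 := by nlinarith [sq_nonneg s]
  have hs13 : s ≤ s ^ 3 := by nlinarith [sq_nonneg s]
  have hs03 : 1 ≤ s ^ 3 := by linarith
  have hid : (t + a) * b - (a + 1) * (m + b - 1)
      = t * (b - p * m) - m * (a - p * t) + (a - b) - m + 1 := by ring
  rw [abs_le] at ha hb
  have e1 : |t * (b - p * m)| ≤ (C0 + C) * s ^ 3 := by
    rw [abs_mul, abs_of_nonneg ht0]
    calc t * |b - p * m| ≤ s ^ 2 * ((C0 + C) * s) := by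
          apply mul_le_mul ht (abs_le.2 hb) (abs_nonneg _) (by positivity)
      _ = _ := by ring
  have e2 : |m * (a - p * t)| ≤ C * s ^ 3 := by
    rw [abs_mul, abs_of_nonneg (by linarith : (0 : ℝ) ≤ m)]
    calc m * |a - p * t| ≤ s ^ 2 * (C * s) := by
          apply mul_le_mul hm (abs_le.2 ha) (abs_nonneg _) (by positivity)
      _ = _ := by ring
  have e3 : a ≤ (p + C) * s ^ 3 := by nlinarith
  have e4 : b ≤ (p + C0 + C) * s ^ 3 := by nlinarith
  rw [abs_le] at e1 e2
  have hd1 : (t + a) * b - (a + 1) * (m + b - 1) ≤ K * s ^ 3 := by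
    rw [hid, hK]; nlinarith
  have hd2 : (a + 1) * (m + b - 1) - (t + a) * b ≤ K * s ^ 3 := by
    have : (a + 1) * (m + b - 1) - (t + a) * b
      = -(t * (b - p * m) - m * (a - p * t) + (a - b) - m + 1) := by rw [← hid]; ring
    rw [this, hK]; nlinarith
  have hX : q ^ 2 * s ^ 4 ≤ (a + 1) * (m + b - 1) := by
    calc q ^ 2 * s ^ 4 = (q * s ^ 2) * (q * s ^ 2) := by ring
      _ ≤ _ := mul_le_mul (by linarith) (by linarith) hqs.le (by linarith)
  have hY : q ^ 2 * s ^ 4 ≤ (t + a) * b := by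
    calc q ^ 2 * s ^ 4 = (q * s ^ 2) * (q * s ^ 2) := by ring
      _ ≤ _ := mul_le_mul (by linarith) (by linarith) hqs.le (by linarith)
  have hη : K * s ^ 3 = K / (q ^ 2 * s) * (q ^ 2 * s ^ 4) := by field_simp
  have hη0 : 0 ≤ K / (q ^ 2 * s) := by positivity
  have f1 := mul_le_mul_of_nonneg_left hX hη0
  have f2 := mul_le_mul_of_nonneg_left hY hη0
  constructor <;> linarith

lemma ratio_le {u v X Y g : ℝ} (hX : 0 < X) (hu : 0 ≤ u) (h : v * X = u * Y)
    (hY : Y ≤ g * X) : v ≤ g * u := by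
  have : v * X ≤ (g * u) * X := by
    rw [h]; nlinarith [mul_le_mul_of_nonneg_left hY hu]
  exact le_of_mul_le_mul_right this hX

lemma harnack (p τ C0 C : ℝ) (hp : 0 < p) (hτ : 0 < τ) (hC0 : 0 ≤ C0) (hC : 0 ≤ C) :
    ∃ H : ℝ, 0 < H ∧ ∃ s0 : ℝ, 0 < s0 ∧ ∀ s : ℝ, s0 ≤ s → ∀ t m : ℕ, τ * s ^ 2 ≤ t →
      τ * s ^ 2 ≤ m → (t : ℝ) + m ≤ s ^ 2 → ∀ x w : ℤ,
      |((w - x : ℤ) : ℝ) - p * (t + m)| ≤ C0 * s → ∀ z z' : ℤ,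
      |((z - x : ℤ) : ℝ) - p * t| ≤ C * s → |((z' - x : ℤ) : ℝ) - p * t| ≤ C * s →
      VV t (z' - x) * VV m (w - z') ≤ H * (VV t (z - x) * VV m (w - z)) := by
  set q := p * τ / 2 with hq
  have hq0 : 0 < q := by positivity
  set K := 2 * C0 + 4 * C + 2 * p + 2 with hK
  have hK0 : 0 < K := by positivity
  refine ⟨Real.exp (2 * C * K / q ^ 2), Real.exp_pos _, 1 + (C0 + C) / q + 1 / τ, by positivity, ?_⟩
  intro s hs t m ht hm htm x w hw z z' hz hz'
  have hs1 : 1 ≤ s := by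
    have : 0 ≤ (C0 + C) / q + 1 / τ := by positivity
    linarith
  have hs0 : 0 < s := by linarith
  have hsq : C0 + C ≤ q * s := by
    have h1 : (C0 + C) / q ≤ s := by
      have : 0 ≤ 1 / τ := by positivity
      linarith
    rw [div_le_iff₀ hq0] at h1; linarith
  have hm1 : (1 : ℝ) ≤ m := by
    have h1 : 1 / τ ≤ s := by
      have : 0 ≤ (C0 + C) / q := by positivity
      linarith
    rw [div_le_iff₀ hτ] at h1
    nlinarith
  have ht0 : (0 : ℝ) ≤ t := by positivity
  set ψ : ℤ → ℝ := fun z => VV t (z - x) * VV m (w - z) with hψ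
  have hψ0 : ∀ z, 0 ≤ ψ z := fun z => mul_nonneg (VV_nonneg _ _) (VV_nonneg _ _)
  set g := 1 + K / (q ^ 2 * s) with hg
  have hg1 : 1 ≤ g := by
    have : 0 ≤ K / (q ^ 2 * s) := by positivity
    linarith
  have adj : ∀ z : ℤ, |((z - x : ℤ) : ℝ) - p * t| ≤ C * s → ψ (z + 1) ≤ g * ψ z ∧ ψ z ≤ g * ψ (z + 1) := by
    intro z hz
    have hb : |((w - z : ℤ) : ℝ) - p * m| ≤ (C0 + C) * s := by
      have : ((w - z : ℤ) : ℝ) - p * m = (((w - x : ℤ) : ℝ) - p * (t + m))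
        - (((z - x : ℤ) : ℝ) - p * t) := by push_cast; ring
      rw [this]
      have hw2 := abs_le.1 hw
      have hz3 := abs_le.1 hz
      rw [abs_le]
      constructor <;> linarith
    have ha0 : q * s ^ 2 ≤ ((z - x : ℤ) : ℝ) := by
      have := (abs_le.1 hz).1
      nlinarith [mul_le_mul_of_nonneg_left ht hp.le, mul_nonneg hC0 hs0.le, mul_le_mul_of_nonneg_right hsq hs0.le]
    have hb0 : q * s ^ 2 ≤ ((w - z : ℤ) : ℝ) := by
      have := (abs_le.1 hb).1
      nlinarith [mul_le_mul_of_nonneg_left hm hp.le, mul_nonneg hC0 hs0.le, mul_le_mul_of_nonneg_right hsq hs0.le]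
    have hqs : 0 < q * s ^ 2 := by positivity
    obtain ⟨h1, h2⟩ := adj_real p C0 C q s t m ((z - x : ℤ) : ℝ) ((w - z : ℤ) : ℝ) hp hC0 hC hq0 hs1
      ht0 (by linarith) hm1 (by linarith) hz hb ha0 hb0
    rw [← hK, ← hg] at h1 h2
    have hapos : 0 < z - x := by
      have : (0 : ℝ) < ((z - x : ℤ) : ℝ) := by linarith
      exact_mod_cast this
    have hbpos : 0 < w - z := by
      have : (0 : ℝ) < ((w - z : ℤ) : ℝ) := by linarith
      exact_mod_cast this
    have r1 := VV_ratio t (z - x) hapos.le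
    have r2 := VV_ratio m (w - z - 1) (by omega)
    have e1 : z - x + 1 = z + 1 - x := by ring
    have e2 : w - z - 1 + 1 = w - z := by ring
    have e3 : w - z - 1 = w - (z + 1) := by ring
    rw [e1] at r1
    rw [e2, e3] at r2
    have hrel : ψ (z + 1) * ((((z - x : ℤ) : ℝ) + 1) * (m + ((w - z : ℤ) : ℝ) - 1))
        = ψ z * ((t + ((z - x : ℤ) : ℝ)) * ((w - z : ℤ) : ℝ)) := by
      simp only [hψ]
      push_cast at r1 r2 ⊢
      linear_combination (VV m (w - (z + 1)) * ((m : ℝ) + (w - z) - 1)) * r1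
        - (((t : ℝ) + (z - x)) * VV t (z - x)) * r2
    have hXpos : 0 < (((z - x : ℤ) : ℝ) + 1) * (m + ((w - z : ℤ) : ℝ) - 1) :=
      mul_pos (by linarith) (by linarith)
    have hYpos : 0 < ((t + ((z - x : ℤ) : ℝ)) * ((w - z : ℤ) : ℝ)) :=
      mul_pos (by linarith) (by linarith)
    exact ⟨ratio_le hXpos (hψ0 _) hrel h1, ratio_le hYpos (hψ0 _) hrel.symm h2⟩
  have chain : ∀ k : ℕ, ∀ z : ℤ, |((z - x : ℤ) : ℝ) - p * t| ≤ C * s →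
      |((z + k - x : ℤ) : ℝ) - p * t| ≤ C * s →
      ψ (z + k) ≤ g ^ k * ψ z ∧ ψ z ≤ g ^ k * ψ (z + k) := by
    intro k
    induction k with
    | zero => intro z _ _; simp
    | succ k ih =>
      intro z h1 h2
      have h3 : |((z + k - x : ℤ) : ℝ) - p * t| ≤ C * s := by
        rw [abs_le] at *
        push_cast at *
        have : (0 : ℝ) ≤ k := by positivity
        constructor <;> linarith
      obtain ⟨i1, i2⟩ := ih z h1 h3
      obtain ⟨a1, a2⟩ := adj (z + k) h3
      have e : z + ((k + 1 : ℕ) : ℤ) = z + k + 1 := by push_cast; ring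
      rw [e]
      have hgk : 0 ≤ g ^ k := by positivity
      constructor
      · calc _ ≤ _ := a1
          _ ≤ g * (g ^ k * ψ z) := mul_le_mul_of_nonneg_left i1 (by linarith)
          _ = _ := by ring
      · calc _ ≤ _ := i2
          _ ≤ g ^ k * (g * ψ (z + k + 1)) := mul_le_mul_of_nonneg_left a2 hgk
          _ = _ := by ring
  have gk : ∀ k : ℕ, (k : ℝ) ≤ 2 * C * s → g ^ k ≤ Real.exp (2 * C * K / q ^ 2) := by
    intro k hk
    have h1 : g ≤ Real.exp (K / (q ^ 2 * s)) := by
      have := Real.add_one_le_exp (K / (q ^ 2 * s))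
      rw [hg]; linarith
    calc g ^ k ≤ Real.exp (K / (q ^ 2 * s)) ^ k := pow_le_pow_left₀ (by linarith) h1 k
      _ = Real.exp (k * (K / (q ^ 2 * s))) := by rw [Real.exp_nat_mul]
      _ ≤ _ := by
        apply Real.exp_le_exp.2
        calc (k : ℝ) * (K / (q ^ 2 * s)) ≤ 2 * C * s * (K / (q ^ 2 * s)) :=
              mul_le_mul_of_nonneg_right hk (by positivity)
          _ = _ := by field_simp
  show ψ z' ≤ _ * ψ z
  have hz2 := abs_le.1 hz
  have hz2' := abs_le.1 hz'
  rcases le_total z z' with h | h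
  · obtain ⟨k, hk⟩ : ∃ k : ℕ, z' = z + k := ⟨(z' - z).toNat, by omega⟩
    subst hk
    refine (chain k z hz hz').1.trans (mul_le_mul_of_nonneg_right (gk k ?_) (hψ0 _))
    push_cast at hz2 hz2'
    linarith
  · obtain ⟨k, hk⟩ : ∃ k : ℕ, z = z' + k := ⟨(z - z').toNat, by omega⟩
    subst hk
    refine (chain k z' hz' hz).2.trans (mul_le_mul_of_nonneg_right (gk k ?_) (hψ0 _))
    push_cast at hz2 hz2'
    linarith

/-- Integers within `h` of `c`. -/
noncomputable def winF (c h : ℝ) : Finset ℤ := Finset.Icc ⌈c - h⌉ ⌊c + h⌋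

lemma mem_winF (c h : ℝ) (z : ℤ) : z ∈ winF c h ↔ |(z : ℝ) - c| ≤ h := by
  rw [winF, Finset.mem_Icc, Int.ceil_le, Int.le_floor, abs_le]
  constructor <;> rintro ⟨h1, h2⟩ <;> constructor <;> linarith

lemma card_winF_le (c h : ℝ) (hh : 0 ≤ h) : ((winF c h).card : ℝ) ≤ 2 * h + 1 := by
  rw [winF, Int.card_Icc]
  have h1 := Int.le_ceil (c - h)
  have h2 := Int.floor_le (c + h)
  rcases le_total 0 (⌊c + h⌋ + 1 - ⌈c - h⌉) with h0 | h0
  · have : (((⌊c + h⌋ + 1 - ⌈c - h⌉).toNat : ℤ) : ℝ) = ((⌊c + h⌋ + 1 - ⌈c - h⌉ : ℤ) : ℝ) := by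
      rw [Int.toNat_of_nonneg h0]
    rw [Int.cast_natCast] at this
    rw [this]; push_cast; linarith
  · rw [Int.toNat_of_nonpos h0]; push_cast; linarith

lemma le_card_winF (c h : ℝ) : 2 * h - 1 ≤ ((winF c h).card : ℝ) := by
  rw [winF, Int.card_Icc]
  have h1 := Int.ceil_lt_add_one (c - h)
  have h2 := Int.lt_floor_add_one (c + h)
  have : ((⌊c + h⌋ + 1 - ⌈c - h⌉ : ℤ) : ℝ) ≤ (((⌊c + h⌋ + 1 - ⌈c - h⌉).toNat : ℤ) : ℝ) := by
    exact_mod_cast Int.self_le_toNat _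
  rw [Int.cast_natCast] at this
  push_cast at this
  linarith

lemma mix (p τ C0 C1 α : ℝ) (hp : 0 < p) (hτ : 0 < τ) (hC0 : 0 ≤ C0) (hC1 : 0 ≤ C1)
    (hα : 0 < α) :
    ∃ c : ℝ, 0 < c ∧ ∃ s0 : ℝ, 0 < s0 ∧ ∀ s : ℝ, s0 ≤ s → ∀ t m : ℕ, τ * s ^ 2 ≤ t →
      τ * s ^ 2 ≤ m → (t : ℝ) + m ≤ s ^ 2 → ∀ x w : ℤ,
      |((w - x : ℤ) : ℝ) - p * (t + m)| ≤ C0 * s → ∀ ctr : ℝ, |ctr - x - p * t| ≤ C1 * s →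
      (∀ z ∈ winF ctr (α * s), x ≤ z) ∧
      c * VV (t + m) (w - x) ≤
        ∑ z ∈ winF ctr (α * s), VV t (z - x) * VV m (w - z) := by
  have hk : 0 < kap p := by unfold kap; positivity
  set C := C1 + α + 2 * C0 + 2 * kap p + 2 with hC
  have hCpos : 0 < C := by positivity
  obtain ⟨H, hH, s1, hs1, har⟩ := harnack p τ C0 C hp hτ hC0 hCpos.le
  refine ⟨α / (2 * H * (2 * C + 1)), by positivity, s1 + 1 + 1 / α + C / (p * τ), by positivity, ?_⟩
  intro s hs t m ht hm htm x w hw ctr hctr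
  have p1 : 0 < 1 / α := by positivity
  have p2 : 0 < C / (p * τ) := by positivity
  have hss : 1 ≤ s := by linarith
  have hs0 : 0 < s := by linarith
  have hsα : 1 ≤ α * s := by
    have : 1 / α ≤ s := by linarith
    rw [div_le_iff₀ hα] at this; linarith
  have hsC : C * s ≤ p * t := by
    have : C / (p * τ) ≤ s := by linarith
    rw [div_le_iff₀ (by positivity)] at this
    calc C * s ≤ s * (p * τ) * s := mul_le_mul_of_nonneg_right this hs0.le
      _ = p * (τ * s ^ 2) := by ring
      _ ≤ _ := mul_le_mul_of_nonneg_left ht hp.le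
  have hclose : ∀ z ∈ winF ctr (α * s), |((z - x : ℤ) : ℝ) - p * t| ≤ C * s := by
    intro z hz
    rw [mem_winF] at hz
    rw [abs_le] at *
    push_cast
    have : (C1 + α) * s ≤ C * s := by
      apply mul_le_mul_of_nonneg_right _ hs0.le
      rw [hC]; linarith
    constructor <;> linarith
  have hge : ∀ z : ℤ, |((z - x : ℤ) : ℝ) - p * t| ≤ C * s → x ≤ z := by
    intro z hz
    have := (abs_le.1 hz).1
    have h0 : (0 : ℝ) ≤ ((z - x : ℤ) : ℝ) := by linarith
    have : 0 ≤ z - x := by exact_mod_cast h0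
    omega
  refine ⟨fun z hz => hge z (hclose z hz), ?_⟩
  set Z := winF (x + p * t) (C * s) with hZ
  have hZm : ∀ z : ℤ, z ∈ Z ↔ |((z - x : ℤ) : ℝ) - p * t| ≤ C * s := by
    intro z
    rw [hZ, mem_winF]; push_cast; rw [sub_sub]
  have hch := cheb x p (C * s) hp.le (by positivity) t Z (fun z hz => hge z ((hZm z).1 hz))
    (fun z _ hz => (hZm z).2 hz.le) m w
  have hd : 1 / 2 ≤ dfc p (C * s) (t + m) (w - x) := by
    unfold dfc
    have h1 : (((w - x : ℤ) : ℝ) - p * ((t + m : ℕ) : ℝ)) ^ 2 ≤ (C0 * s) ^ 2 := by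
      rw [← sq_abs]; push_cast at hw ⊢
      exact pow_le_pow_left₀ (abs_nonneg _) hw 2
    have h2 : kap p * ((t + m : ℕ) : ℝ) ≤ kap p * s ^ 2 := by
      apply mul_le_mul_of_nonneg_left _ hk.le
      push_cast; exact htm
    have h3 : C0 ^ 2 + kap p ≤ C ^ 2 / 2 := by
      have : 2 * C0 + 2 * kap p + 2 ≤ C := by rw [hC]; linarith
      have h4 : (2 * C0 + 2 * kap p + 2) ^ 2 ≤ C ^ 2 := pow_le_pow_left₀ (by positivity) this 2
      nlinarith [mul_nonneg hC0 hk.le, sq_nonneg (kap p)]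
    have h5 : ((((w - x : ℤ) : ℝ) - p * ((t + m : ℕ) : ℝ)) ^ 2 + kap p * ((t + m : ℕ) : ℝ))
        / (C * s) ^ 2 ≤ 1 / 2 := by
      rw [div_le_iff₀ (by positivity)]
      nlinarith [mul_le_mul_of_nonneg_right h3 (sq_nonneg s)]
    linarith
  have hV := VV_nonneg (t + m) (w - x)
  have hch2 : VV (t + m) (w - x) / 2 ≤ ∑ z ∈ Z, VV t (z - x) * VV m (w - z) := by
    refine le_trans ?_ hch
    nlinarith
  set SW := ∑ z ∈ winF ctr (α * s), VV t (z - x) * VV m (w - z) with hSW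
  set SZ := ∑ z ∈ Z, VV t (z - x) * VV m (w - z) with hSZ
  have hSW0 : 0 ≤ SW := Finset.sum_nonneg fun z _ => mul_nonneg (VV_nonneg _ _) (VV_nonneg _ _)
  have hSZ0 : 0 ≤ SZ := Finset.sum_nonneg fun z _ => mul_nonneg (VV_nonneg _ _) (VV_nonneg _ _)
  have hdouble : ((winF ctr (α * s)).card : ℝ) * SZ ≤ (Z.card : ℝ) * (H * SW) := by
    have h1 : ∑ z ∈ winF ctr (α * s), ∑ z' ∈ Z, VV t (z' - x) * VV m (w - z') ≤
        ∑ z ∈ winF ctr (α * s), ∑ z' ∈ Z, H * (VV t (z - x) * VV m (w - z)) := by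
      refine Finset.sum_le_sum fun z hz => Finset.sum_le_sum fun z' hz' => ?_
      exact har s (by linarith) t m ht hm htm x w hw z z' (hclose z hz) ((hZm z').1 hz')
    rw [Finset.sum_const, nsmul_eq_mul] at h1
    refine h1.trans (le_of_eq ?_)
    simp_rw [Finset.sum_const, nsmul_eq_mul]
    rw [hSW, Finset.mul_sum, Finset.mul_sum]
  have hcW : α * s ≤ ((winF ctr (α * s)).card : ℝ) := by
    have := le_card_winF ctr (α * s)
    linarith
  have hcZ : (Z.card : ℝ) ≤ (2 * C + 1) * s := by
    have := card_winF_le (x + p * t) (C * s) (by positivity)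
    linarith
  have h7 : α * s * (VV (t + m) (w - x) / 2) ≤ (2 * C + 1) * s * (H * SW) := by
    calc _ ≤ α * s * SZ := mul_le_mul_of_nonneg_left hch2 (by positivity)
      _ ≤ _ := mul_le_mul_of_nonneg_right hcW hSZ0
      _ ≤ _ := hdouble
      _ ≤ _ := mul_le_mul_of_nonneg_right hcZ (by positivity)
  rw [div_mul_eq_mul_div, div_le_iff₀ (by positivity)]
  have h8 : s * (α * VV (t + m) (w - x)) ≤ s * (SW * (2 * H * (2 * C + 1))) := by nlinarith
  exact le_of_mul_le_mul_left h8 hs0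

lemma dfc_quarter (p a s τ : ℝ) (hp : 0 < p) (ha : 0 < a) (hs : 0 < s)
    (hτ : τ * (64 * kap p) ≤ a ^ 2) (m : ℕ) (hm : (m : ℝ) ≤ 3 * τ * s ^ 2) (e : ℤ)
    (he : |(e : ℝ) - p * m| ≤ 3 / 8 * a * s) : 1 / 4 ≤ dfc p (a * s / 2) m e := by
  unfold dfc
  have hk : 0 < kap p := by unfold kap; positivity
  have h1 : ((e : ℝ) - p * m) ^ 2 ≤ (3 / 8 * a * s) ^ 2 := by
    rw [← sq_abs]; exact pow_le_pow_left₀ (abs_nonneg _) he 2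
  have h2 : kap p * m ≤ kap p * (3 * τ * s ^ 2) := mul_le_mul_of_nonneg_left hm hk.le
  have h3 := mul_le_mul_of_nonneg_right hτ (sq_nonneg s)
  have h4 : (((e : ℝ) - p * m) ^ 2 + kap p * m) / (a * s / 2) ^ 2 ≤ 3 / 4 := by
    rw [div_le_iff₀ (by positivity)]
    nlinarith
  linarith

set_option maxHeartbeats 1000000 in
lemma counting (p a C1 Lc : ℝ) (hp : 0 < p) (ha : 0 < a) (hC1 : 0 ≤ C1) (hLc : 0 ≤ Lc) :
    ∃ ε : ℝ, 0 < ε ∧ ∃ s0 : ℝ, 0 < s0 ∧ ∀ s : ℝ, s0 ≤ s → ∀ n : ℕ, s ^ 2 = n →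
      ∀ (x y : ℤ) (ctr : ℕ → ℝ), ctr 0 = x → ctr n = y →
      (∀ j ≤ n, |ctr j - x - p * j| ≤ C1 * s) →
      (∀ i r : ℕ, i + r ≤ n → |ctr (i + r) - ctr i - p * r| ≤ Lc * r / s) →
      ε * VV n (y - x) ≤ cnt (fun j w => |(w : ℝ) - ctr j| ≤ 3 / 4 * a * s) x n y := by
  have hk : 0 < kap p := by unfold kap; positivity
  obtain ⟨τ, hτ0, hτ1, hτ2, hτ3⟩ : ∃ τ : ℝ, 0 < τ ∧ τ ≤ 1 / 2 ∧ τ * (24 * (Lc + 1)) ≤ a ∧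
      τ * (64 * kap p) ≤ a ^ 2 := by
    refine ⟨min (1 / 2) (min (a / (24 * (Lc + 1))) (a ^ 2 / (64 * kap p))), by positivity,
      min_le_left _ _, ?_, ?_⟩
    · rw [← le_div_iff₀ (by positivity)]
      exact (min_le_right _ _).trans (min_le_left _ _)
    · rw [← le_div_iff₀ (by positivity)]
      exact (min_le_right _ _).trans (min_le_right _ _)
  obtain ⟨c, hc, s1, hs1, hmix⟩ := mix p τ (C1 + a / 8) C1 (a / 8) hp hτ0 (by positivity) hC1
    (by positivity)
  set c' := min c 1 / 4 with hc'
  have hc'0 : 0 < c' := by positivity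
  have hc'1 : c' ≤ 1 := by
    have : min c 1 ≤ 1 := min_le_right _ _
    linarith
  have hc'c : c' ≤ c / 4 := by
    have : min c 1 ≤ c := min_le_left _ _
    linarith
  set I : ℕ := ⌈1 / τ⌉₊ with hI
  refine ⟨1 / 4 * c' ^ I, by positivity, s1 + 2 + 2 / τ, by positivity, ?_⟩
  intro s hs n hn x y ctr hc0 hcn hcb hcl
  have p1 : 0 < 2 / τ := by positivity
  have hs2 : 2 ≤ s := by linarith
  have hs0 : 0 < s := by linarith
  have hsτ : 2 ≤ τ * s ^ 2 := by
    have : 2 / τ ≤ s := by linarith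
    rw [div_le_iff₀ hτ0] at this
    nlinarith
  set T : ℕ → ℤ → Prop := fun j w => |(w : ℝ) - ctr j| ≤ 3 / 4 * a * s with hT
  set q : ℕ := ⌈τ * s ^ 2⌉₊ with hq
  have hq1 : τ * s ^ 2 ≤ q := Nat.le_ceil _
  have hq2 : (q : ℝ) < τ * s ^ 2 + 1 := Nat.ceil_lt_add_one (by positivity)
  have hqn : q ≤ n := by
    have : (q : ℝ) ≤ n := by
      rw [← hn]; nlinarith
    exact_mod_cast this
  have h2q : (2 : ℝ) * q ≤ 3 * τ * s ^ 2 := by linarith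
  -- drift bound over a block
  have hdrift : ∀ i r : ℕ, i + r ≤ n → r ≤ 2 * q → |ctr (i + r) - ctr i - p * r| ≤ a / 8 * s := by
    intro i r h1 h2
    refine (hcl i r h1).trans ?_
    have h3 : (r : ℝ) ≤ 3 * τ * s ^ 2 := by
      have : (r : ℝ) ≤ 2 * q := by exact_mod_cast h2
      linarith
    rw [div_le_iff₀ hs0]
    have h4 : Lc * (3 * τ) ≤ a / 8 := by nlinarith
    calc Lc * r ≤ Lc * (3 * τ * s ^ 2) := mul_le_mul_of_nonneg_left h3 hLc
      _ = Lc * (3 * τ) * s ^ 2 := by ring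
      _ ≤ a / 8 * s ^ 2 := mul_le_mul_of_nonneg_right h4 (by positivity)
      _ = _ := by ring
  have hlam : 0 < a * s / 2 := by positivity
  have has : 0 < a * s := by positivity
  have hTblock : ∀ t r : ℕ, t + r ≤ n → r ≤ 2 * q → ∀ z w : ℤ, |(z : ℝ) - ctr t| ≤ a / 8 * s →
      |((w - z : ℤ) : ℝ) - p * r| < a * s / 2 → T (t + r) w := by
    intro t r h1 h2 z w h3 h4
    have h5 := hdrift t r h1 h2
    simp only [hT]
    push_cast at h4
    rw [abs_lt] at h4
    rw [abs_le] at *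
    constructor <;> linarith
  have hdq : ∀ t r : ℕ, t + r ≤ n → r ≤ 2 * q → ∀ z w : ℤ, |(z : ℝ) - ctr t| ≤ a / 8 * s →
      |(w : ℝ) - ctr (t + r)| ≤ a / 8 * s → 1 / 4 ≤ dfc p (a * s / 2) r (w - z) := by
    intro t r h1 h2 z w h3 h4
    have h5 := hdrift t r h1 h2
    apply dfc_quarter p a s τ hp ha hs0 hτ3
    · have : (r : ℝ) ≤ 2 * q := by exact_mod_cast h2
      linarith
    · push_cast
      rw [abs_le] at *
      constructor <;> linarith
  have main : ∀ i : ℕ, ∀ t : ℕ, q ≤ t → t ≤ (i + 2) * q → t ≤ n → ∀ w : ℤ,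
      |(w : ℝ) - ctr t| ≤ a / 8 * s → 1 / 4 * c' ^ i * VV t (w - x) ≤ cnt T x t w := by
    intro i
    induction i with
    | zero =>
      intro t _ ht2 htn w hw
      have hxx : |(x : ℝ) - ctr 0| ≤ a / 8 * s := by rw [hc0]; simp; positivity
      have hb := block T x p (a * s / 2) hp.le hlam 0 t {x} 1 (by norm_num) (by simp)
        (by
          intro z hz
          rw [Finset.mem_singleton] at hz
          subst hz
          simp [cnt, VV_zero])
        (by
          intro r hr _ z hz w hw
          rw [Finset.mem_singleton] at hz
          subst hz
          exact hTblock 0 r (by omega) (by omega) z w hxx hw) t le_rfl w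
      rw [Finset.sum_singleton, zero_add, sub_self, VV_zero, if_pos rfl] at hb
      have h1 := hdq 0 t (by omega) (by omega) x w hxx (by simpa using hw)
      have h2 := VV_nonneg t (w - x)
      refine le_trans ?_ hb
      rw [pow_zero]
      nlinarith
    | succ i ih =>
      intro t ht1 ht2 htn w hw
      have hV := VV_nonneg t (w - x)
      rcases le_or_gt t ((i + 2) * q) with h | h
      · refine le_trans ?_ (ih t ht1 h htn w hw)
        apply mul_le_mul_of_nonneg_right _ hV
        rw [pow_succ]
        have : 0 < c' ^ i := by positivity
        nlinarith
      · obtain ⟨u, rfl⟩ : ∃ u, t = u + q := ⟨t - q, by omega⟩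
        have hqu : q ≤ u := by nlinarith
        have huu : u ≤ (i + 2) * q := by nlinarith
        have hqu' : (q : ℝ) ≤ u := by exact_mod_cast hqu
        have hun : (u : ℝ) + q ≤ s ^ 2 := by rw [hn]; exact_mod_cast htn
        have hcc := hcb (u + q) htn
        obtain ⟨hx, hm⟩ := hmix s (by linarith) u q (by linarith) hq1 hun x w
          (by
            push_cast at hcc ⊢
            rw [abs_le] at *
            constructor <;> linarith) (ctr u) (hcb u (by omega))
        have hb := block T x p (a * s / 2) hp.le hlam u q (winF (ctr u) (a / 8 * s))
          (1 / 4 * c' ^ i) (by positivity) hx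
          (fun z hz => ih u hqu huu (by omega) z ((mem_winF _ _ _).1 hz))
          (fun r hr _ z hz w hw => hTblock u r (by omega) (by omega) z w
            ((mem_winF _ _ _).1 hz) hw) q le_rfl w
        refine le_trans ?_ hb
        have h3 : 1 / 4 * ∑ z ∈ winF (ctr u) (a / 8 * s), VV u (z - x) * VV q (w - z) ≤
            ∑ z ∈ winF (ctr u) (a / 8 * s),
              VV u (z - x) * (VV q (w - z) * dfc p (a * s / 2) q (w - z)) := by
          rw [Finset.mul_sum]
          refine Finset.sum_le_sum fun z hz => ?_
          have h4 := hdq u q htn (by omega) z w ((mem_winF _ _ _).1 hz) hw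
          have h5 := mul_nonneg (VV_nonneg u (z - x)) (VV_nonneg q (w - z))
          nlinarith
        have h6 : c' * VV (u + q) (w - x) ≤ ∑ z ∈ winF (ctr u) (a / 8 * s),
              VV u (z - x) * (VV q (w - z) * dfc p (a * s / 2) q (w - z)) := by
          refine le_trans ?_ h3
          nlinarith [mul_le_mul_of_nonneg_right hc'c hV]
        calc _ = 1 / 4 * c' ^ i * (c' * VV (u + q) (w - x)) := by ring
          _ ≤ _ := mul_le_mul_of_nonneg_left h6 (by positivity)
  apply main I n hqn _ le_rfl y
  · rw [hcn]; simp; positivity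
  · have h1 : 1 / τ ≤ I := Nat.le_ceil _
    rw [div_le_iff₀ hτ0] at h1
    have h2 : (n : ℝ) ≤ ((I * q : ℕ) : ℝ) := by
      push_cast
      rw [← hn]
      have : (0 : ℝ) ≤ I := by positivity
      calc s ^ 2 ≤ (I * τ) * s ^ 2 := by nlinarith [sq_nonneg s]
        _ = I * (τ * s ^ 2) := by ring
        _ ≤ _ := mul_le_mul_of_nonneg_left hq1 this
    have h3 : n ≤ I * q := by exact_mod_cast h2
    nlinarith

lemma corridor_eq (A B x y δ t : ℝ) (hδ : 0 < δ) (hδ2 : δ < 1 / 2) :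
    corridor A B x y δ t =
      x + A + min t δ / δ * (B - x) + max (t - (1 - δ)) 0 / δ * (y - B) := by
  unfold corridor
  split_ifs with h1 h2
  · rw [min_eq_left h1, max_eq_right (by linarith)]; ring
  · rw [min_eq_right (by linarith), max_eq_right (by linarith), div_self hδ.ne']; ring
  · rw [min_eq_right (by linarith), max_eq_left (by linarith), div_self hδ.ne']; ring

lemma corridor_lip (B x y δ t u : ℝ) (hδ : 0 < δ) (hδ2 : δ < 1 / 2) (R : ℝ)
    (hx : |B - x| ≤ R) (hy : |y - B| ≤ R) :
    |corridor 0 B x y δ t - corridor 0 B x y δ u| ≤ 2 * R / δ * |t - u| := by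
  rw [corridor_eq _ _ _ _ _ _ hδ hδ2, corridor_eq _ _ _ _ _ _ hδ hδ2]
  have e : x + 0 + min t δ / δ * (B - x) + max (t - (1 - δ)) 0 / δ * (y - B)
      - (x + 0 + min u δ / δ * (B - x) + max (u - (1 - δ)) 0 / δ * (y - B))
      = (min t δ - min u δ) / δ * (B - x)
        + (max (t - (1 - δ)) 0 - max (u - (1 - δ)) 0) / δ * (y - B) := by ring
  rw [e]
  have h1 : |min t δ - min u δ| ≤ |t - u| := by
    have := abs_min_sub_min_le_max t δ u δ
    simpa using this
  have h2 : |max (t - (1 - δ)) 0 - max (u - (1 - δ)) 0| ≤ |t - u| := by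
    have := abs_max_sub_max_le_max (t - (1 - δ)) 0 (u - (1 - δ)) 0
    simpa using this
  have h3 : |(min t δ - min u δ) / δ * (B - x)| ≤ |t - u| / δ * R := by
    rw [abs_mul, abs_div, abs_of_pos hδ]
    gcongr
  have h4 : |(max (t - (1 - δ)) 0 - max (u - (1 - δ)) 0) / δ * (y - B)| ≤ |t - u| / δ * R := by
    rw [abs_mul, abs_div, abs_of_pos hδ]
    gcongr
  calc _ ≤ _ := abs_add_le _ _
    _ ≤ |t - u| / δ * R + |t - u| / δ * R := add_le_add h3 h4
    _ = _ := by ring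

lemma corridor_shift (A B x y δ t : ℝ) : corridor A B x y δ t = corridor 0 B x y δ t + A := by
  unfold corridor; split_ifs <;> ring

/-- Control at integer times gives control of the interpolation. -/
lemma interp_control (L : ℤ → ℤ) (n : ℕ) (hn : 0 < n) (p b Λ : ℝ) (hΛ : 0 ≤ Λ)
    (F : ℝ → ℝ) (hF : ∀ t u, |F t - F u| ≤ Λ * |t - u|)
    (hL : ∀ j : ℕ, j ≤ n → |(L j : ℝ) - p * j - F (j / n)| ≤ b) (t : ℝ)
    (ht : t ∈ Set.Icc (0 : ℝ) 1) :
    |interpZ L (t * n) - p * t * n - F t| ≤ b + Λ / n := by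
  have hn0 : (0 : ℝ) < n := by exact_mod_cast hn
  have hu0 : 0 ≤ t * n := mul_nonneg ht.1 hn0.le
  have hun : t * n ≤ n := by nlinarith [ht.2]
  obtain ⟨j, hj⟩ : ∃ j : ℕ, ⌊t * n⌋ = (j : ℤ) :=
    ⟨⌊t * n⌋.toNat, (Int.toNat_of_nonneg (Int.floor_nonneg.2 hu0)).symm⟩
  have hj1 : (j : ℝ) ≤ t * n := by
    have := Int.floor_le (t * n)
    rw [hj] at this; exact_mod_cast this
  have hj2 : t * n < j + 1 := by
    have := Int.lt_floor_add_one (t * n)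
    rw [hj] at this; exact_mod_cast this
  have hjn : j ≤ n := by
    have : (j : ℝ) ≤ n := hj1.trans hun
    exact_mod_cast this
  have near : ∀ i : ℕ, i ≤ n → |t * n - i| ≤ 1 → |(L i : ℝ) - p * i - F t| ≤ b + Λ / n := by
    intro i hi h
    have h1 := hL i hi
    have h2 := hF (i / n) t
    have h3 : |(i : ℝ) / n - t| ≤ 1 / n := by
      have : (i : ℝ) / n - t = -(t * n - i) / n := by field_simp; ring
      rw [this, abs_div, abs_neg, abs_of_pos hn0]
      gcongr
    have h4 : Λ * |(i : ℝ) / n - t| ≤ Λ / n := by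
      calc _ ≤ Λ * (1 / n) := mul_le_mul_of_nonneg_left h3 hΛ
        _ = _ := by ring
    have h5 := h2.trans h4
    rw [abs_le] at *
    constructor <;> linarith
  have near1 := near j hjn (by rw [abs_le]; constructor <;> linarith)
  have hθ0 : 0 ≤ t * n - j := by linarith
  have hθ1 : t * n - j ≤ 1 := by linarith
  have hI : interpZ L (t * n) = (L j : ℝ) + (t * n - j) * ((L (j + 1) : ℝ) - L j) := by
    simp [interpZ, interp, hj]
  rcases Nat.lt_or_ge j n with h | h
  · have near2 := near (j + 1) h (by push_cast; rw [abs_le]; constructor <;> linarith)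
    push_cast at near2
    have e : interpZ L (t * n) - p * t * n - F t
      = (1 - (t * n - j)) * ((L j : ℝ) - p * j - F t)
        + (t * n - j) * ((L (j + 1) : ℝ) - p * (j + 1) - F t) := by rw [hI]; ring
    rw [e]
    rw [abs_le] at near1 near2 ⊢
    constructor <;> nlinarith
  · have hjn' : j = n := le_antisymm hjn h
    have hθ : t * n - j = 0 := by
      apply le_antisymm _ hθ0
      rw [hjn']; linarith
    have e : interpZ L (t * n) - p * t * n - F t = (L j : ℝ) - p * j - F t := by
      rw [hI, hθ]
      have : p * t * n = p * j := by rw [mul_assoc]; congr 1; linarith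
      rw [this]; ring
    rw [e]; exact near1


/-- (Lemma 3.5, staying in the corridor.) With probability bounded below, a rescaled
geometric random walk bridge stays in the corridor between `f(·|A,B,·,·,δ1)` and
`f(·|-A,B,·,·,δ1)`. -/
theorem staying_in_corridor
    (p M1 M2 A : ℝ) (hp : 0 < p) (hM1 : 0 < M1) (hM2 : 0 < M2) (hA : 0 < A)
    (δ1 : ℝ) (hδ1 : δ1 ∈ Set.Ioo (0 : ℝ) (1 / 2)) :
    ∃ (N4 : ℕ) (ε : ℝ), 0 < ε ∧
      ∀ n : ℕ, N4 ≤ n → ∀ x y : ℤ, x ≤ y →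
        |(x : ℝ)| ≤ M1 * Real.sqrt n → |(y : ℝ) - n * p| ≤ M1 * Real.sqrt n →
        ∀ B ∈ Set.Icc (-M2) M2,
        ∀ (Ω : Type) (_ : MeasurableSpace Ω) (P : Measure Ω), IsProbabilityMeasure P →
        ∀ Q : Ω → ℤ → ℤ, UniformOn P Q (OmegaPath 0 n x y) →
          ENNReal.ofReal ε < P {ω | ∀ t ∈ Set.Icc (0 : ℝ) 1,
            corridor (-A) B ((Real.sqrt (p * (1 + p)))⁻¹ * (Real.sqrt n)⁻¹ * x)
                ((Real.sqrt (p * (1 + p)))⁻¹ * (Real.sqrt n)⁻¹ * ((y : ℝ) - p * n)) δ1 t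
              ≤ (Real.sqrt (p * (1 + p)))⁻¹ * (Real.sqrt n)⁻¹ *
                (interpZ (Q ω) (t * n) - p * t * n) ∧
            (Real.sqrt (p * (1 + p)))⁻¹ * (Real.sqrt n)⁻¹ *
                (interpZ (Q ω) (t * n) - p * t * n)
              ≤ corridor A B ((Real.sqrt (p * (1 + p)))⁻¹ * (Real.sqrt n)⁻¹ * x)
                ((Real.sqrt (p * (1 + p)))⁻¹ * (Real.sqrt n)⁻¹ * ((y : ℝ) - p * n)) δ1 t} := by
  obtain ⟨hδ0, hδ2⟩ := hδ1
  set σ := Real.sqrt (p * (1 + p)) with hσ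
  have hσ0 : 0 < σ := Real.sqrt_pos.2 (by positivity)
  obtain ⟨R, hR⟩ : ∃ R, R = M2 + M1 / σ := ⟨_, rfl⟩
  have hR0 : 0 < R := by rw [hR]; positivity
  obtain ⟨Lc, hLc⟩ : ∃ Lc, Lc = σ * (2 * R / δ1) := ⟨_, rfl⟩
  have hLc0 : 0 < Lc := by rw [hLc]; positivity
  obtain ⟨ε, hε, s0, hs0, hcount⟩ := counting p (A * σ) Lc Lc hp (by positivity) hLc0.le hLc0.le
  obtain ⟨s1, hs1⟩ : ∃ s1, s1 = s0 + 1 + 4 * Lc / (A * σ) := ⟨_, rfl⟩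
  have hs1pos : 0 < s1 := by rw [hs1]; positivity
  refine ⟨⌈s1 ^ 2⌉₊, ε / 2, by positivity, ?_⟩
  intro n hn x y _ hx hy B hB Ω _ P hP Q hQ
  set s := Real.sqrt n with hs
  have hns : s ^ 2 = n := Real.sq_sqrt (Nat.cast_nonneg n)
  have hss1 : s1 ≤ s := by
    apply Real.le_sqrt_of_sq_le
    exact (Nat.le_ceil _).trans (by exact_mod_cast hn)
  have hq0 : 0 < 4 * Lc / (A * σ) := by positivity
  have hsge : 1 ≤ s := by linarith
  have hspos : 0 < s := by linarith
  have hLs : Lc / s ≤ A * σ * s / 4 := by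
    have : 4 * Lc / (A * σ) ≤ s := by linarith
    rw [div_le_iff₀ (by positivity)] at this
    rw [div_le_iff₀ hspos]
    have h2 : A * σ * s ≤ A * σ * s * s := le_mul_of_one_le_right (by positivity) hsge
    nlinarith
  have hnpos : 0 < n := by
    have : (0 : ℝ) < n := by rw [← hns]; positivity
    exact_mod_cast this
  have hn0 : (0 : ℝ) < n := by exact_mod_cast hnpos
  set x' := σ⁻¹ * s⁻¹ * (x : ℝ) with hx'
  set y' := σ⁻¹ * s⁻¹ * ((y : ℝ) - p * n) with hy'
  have hscale : ∀ v : ℝ, |v| ≤ M1 * s → |σ⁻¹ * s⁻¹ * v| ≤ M1 / σ := by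
    intro v hv
    rw [abs_mul, abs_of_pos (by positivity : 0 < σ⁻¹ * s⁻¹)]
    calc σ⁻¹ * s⁻¹ * |v| ≤ σ⁻¹ * s⁻¹ * (M1 * s) :=
          mul_le_mul_of_nonneg_left hv (by positivity)
      _ = _ := by field_simp
  have hx1 : |x'| ≤ M1 / σ := hscale _ hx
  have hy1 : |y'| ≤ M1 / σ := hscale _ (by rw [mul_comm p]; exact hy)
  have hBx : |B - x'| ≤ R := by
    rw [abs_le] at *
    rw [hR]
    constructor <;> linarith [hB.1, hB.2]
  have hBy : |y' - B| ≤ R := by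
    rw [abs_le] at *
    rw [hR]
    constructor <;> linarith [hB.1, hB.2]
  have hlip := fun t u => corridor_lip B x' y' δ1 t u hδ0 hδ2 R hBx hBy
  set F : ℝ → ℝ := fun t => σ * s * corridor 0 B x' y' δ1 t with hF
  have hFlip : ∀ t u, |F t - F u| ≤ (Lc * s) * |t - u| := by
    intro t u
    have : F t - F u = σ * s * (corridor 0 B x' y' δ1 t - corridor 0 B x' y' δ1 u) := by
      simp only [hF]; ring
    rw [this, abs_mul, abs_of_pos (by positivity : 0 < σ * s)]
    calc _ ≤ σ * s * (2 * R / δ1 * |t - u|) :=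
          mul_le_mul_of_nonneg_left (hlip t u) (by positivity)
      _ = _ := by rw [hLc]; ring
  have hF0 : F 0 = x := by
    simp only [hF, corridor, if_pos hδ0.le, hx']
    field_simp
    ring
  have hF1 : F 1 = y - p * n := by
    simp only [hF, corridor]
    rw [if_neg (by linarith), if_neg (by linarith)]
    have : (1 - (1 - δ1)) / δ1 = 1 := by field_simp; ring
    rw [this, hy']
    field_simp
    ring
  set ctr : ℕ → ℝ := fun j => p * j + F ((j : ℝ) / n) with hctr
  have hctr0 : ctr 0 = x := by simp [hctr, hF0]
  have hctrn : ctr n = y := by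
    simp only [hctr]; rw [div_self hn0.ne', hF1]; ring
  have hcl : ∀ i r : ℕ, i + r ≤ n → |ctr (i + r) - ctr i - p * r| ≤ Lc * r / s := by
    intro i r _
    have e : ctr (i + r) - ctr i - p * r = F (((i + r : ℕ) : ℝ) / n) - F ((i : ℝ) / n) := by
      simp only [hctr]; push_cast; ring
    rw [e]
    refine (hFlip _ _).trans (le_of_eq ?_)
    have e2 : ((i + r : ℕ) : ℝ) / n - (i : ℝ) / n = r / n := by push_cast; ring
    rw [e2, abs_of_nonneg (by positivity), ← hns]
    field_simp
  have hcb : ∀ j ≤ n, |ctr j - x - p * j| ≤ Lc * s := by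
    intro j hj
    have := hcl 0 j (by omega)
    rw [zero_add, hctr0] at this
    refine this.trans ?_
    rw [div_le_iff₀ hspos]
    have hj' : (j : ℝ) ≤ s ^ 2 := by rw [hns]; exact_mod_cast hj
    nlinarith
  have hcnt := hcount s (by linarith) n hns x y ctr hctr0 hctrn hcb hcl
  refine lt_of_lt_of_le ?_ (uniform_lower P Q n x y hQ _ ε hε.le _ ?_ hcnt)
  · exact (ENNReal.ofReal_lt_ofReal_iff hε).2 (by linarith)
  intro ω hω t ht
  have hctl := interp_control (Q ω) n hnpos p (3 / 4 * (A * σ) * s) (Lc * s) (by positivity) F hFlip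
    (by
      intro j hj
      rcases Nat.eq_zero_or_pos j with h | h
      · subst h
        have hQ0 : Q ω 0 = x := (hQ.1 ω).2.1
        simp [hQ0, hF0]
        positivity
      · have := hω j h hj
        rw [sub_sub]
        exact this) t ht
  have hfin : |interpZ (Q ω) (t * n) - p * t * n - F t| ≤ A * σ * s := by
    refine hctl.trans ?_
    have : Lc * s / n = Lc / s := by rw [← hns]; field_simp
    rw [this]; linarith
  rw [corridor_shift (-A), corridor_shift A]
  have hk0 : 0 < σ⁻¹ * s⁻¹ := by positivity
  have hFk : σ⁻¹ * s⁻¹ * F t = corridor 0 B x' y' δ1 t := by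
    simp only [hF]; field_simp
  have hAk : σ⁻¹ * s⁻¹ * (A * σ * s) = A := by field_simp
  rw [abs_le] at hfin
  have g1 := mul_le_mul_of_nonneg_left hfin.1 hk0.le
  have g2 := mul_le_mul_of_nonneg_left hfin.2 hk0.le
  rw [mul_neg, hAk, mul_sub, hFk] at g1
  rw [hAk, mul_sub, hFk] at g2
  constructor <;> linarith
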